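/- arXiv:2103.07934 — 3 statements merged into one kernel-verified Lean document; each statement's English description precedes it below -/
import Mathlib

section
/- For every n ≥ 1 and every Boolean function f : {0,1}^n → {0,1}, the acceptance probability of the BLR linearity test satisfies |{(x,y) ∈ {0,1}^n × {0,1}^n : f(x) ⊕ f(y) = f(x ⊕ y)}| / 4^n = 1/2 + (1/2) · Σ_{a ∈ {0,1}^n} f̂(a)³, and this quantity is at most 1/2 + (1/2) · max_{a ∈ {0,1}^n} f̂(a). -/
open Finset Real Classical

noncomputable def walsh (n : ℕ) (f : (Fin n → ZMod 2) → ZMod 2) (a : Fin n → ZMod 2) : ℝ :=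
  (2 ^ n : ℝ)⁻¹ * ∑ x : Fin n → ZMod 2, (-1 : ℝ) ^ ((f x + ∑ i, a i * x i).val)

def hamDist (n : ℕ) (f g : (Fin n → ZMod 2) → ZMod 2) : ℕ :=
  (Finset.univ.filter fun x => f x ≠ g x).card

def chi (n : ℕ) (a : Fin n → ZMod 2) (b : ZMod 2) : (Fin n → ZMod 2) → ZMod 2 :=
  fun x => (∑ i, a i * x i) + b

noncomputable def nonlinearity (n : ℕ) (f : (Fin n → ZMod 2) → ZMod 2) : ℝ :=
  Finset.univ.inf' ⟨((fun _ => 0), 0), Finset.mem_univ _⟩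
    (fun p : (Fin n → ZMod 2) × ZMod 2 => (hamDist n f (chi n p.1 p.2) : ℝ) / 2 ^ n)

def wt (n : ℕ) (f : (Fin n → ZMod 2) → ZMod 2) : ℕ :=
  (Finset.univ.filter fun x => f x = 1).card

noncomputable def PWC (s t : ℕ) (f : (Fin (s + t) → ZMod 2) → ZMod 2)
    (p : Fin s → ZMod 2) : ℝ :=
  ∑ x : Fin t → ZMod 2, walsh (s + t) f (Fin.append p x) ^ 2

/-!
Writing `χ` for the sign character of `ZMod 2`, the acceptance event `f x + f y = f (x + y)` has
indicator `(1 + χ (f x) * χ (f y) * χ (f (x + y))) / 2`. The average of the triple product is the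
sum of the cubes of the Walsh coefficients: Plancherel, applied to a function and a translate by
`y`, gives the autocorrelation at `y`, and pairing it with a third function in `y` produces a third
transform. By Parseval the squared coefficients are weights of total mass `1`, so the sum of cubes
is a weighted average of the coefficients and is at most their maximum.
-/

theorem addChar_sum_eq_prod {ι A M : Type*} [AddCommMonoid A] [CommMonoid M] (ψ : AddChar A M)
    (s : Finset ι) (g : ι → A) : ψ (∑ i ∈ s, g i) = ∏ i ∈ s, ψ (g i) :=
  map_prod ψ.toMonoidHom (fun i => Multiplicative.ofAdd (g i)) s

section VectorDFT

variable {R R' ι : Type*} [CommRing R] [Fintype R] [CommRing R'] [Fintype ι] [DecidableEq ι]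

theorem sum_addChar_dotProduct_eq_ite [DecidableEq R] [IsDomain R'] {ψ : AddChar R R'}
    (hψ : ψ.IsPrimitive) (z : ι → R) :
    ∑ a : ι → R, ψ (a ⬝ᵥ z) = if z = 0 then (Fintype.card R : R') ^ Fintype.card ι else 0 := by
  have factor : ∑ a : ι → R, ψ (a ⬝ᵥ z) = ∏ i, ∑ c, ψ (c * z i) := by
    simp only [dotProduct, addChar_sum_eq_prod, Fintype.prod_sum]
  simp only [factor, AddChar.sum_mulShift _ hψ, Nat.cast_ite, Nat.cast_zero]
  split_ifs with hz
  · simp [hz]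
  · obtain ⟨i, hi⟩ := Function.ne_iff.mp hz
    exact Finset.prod_eq_zero (Finset.mem_univ i) (if_neg hi)

/-- The unnormalized discrete Fourier transform on `ι → R` with respect to an additive character
`ψ` of `R`. The kernel is `ψ (a ⬝ᵥ x)`, without the customary minus sign, so that the Walsh
transform is the case `R = ZMod 2`. -/
def vectorDFT (ψ : AddChar R R') (F : (ι → R) → R') (a : ι → R) : R' :=
  ∑ x, F x * ψ (a ⬝ᵥ x)

variable [IsDomain R'] {ψ : AddChar R R'}

theorem sum_vectorDFT_mul_vectorDFT_mul_addChar (hψ : ψ.IsPrimitive) (F G : (ι → R) → R')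
    (y : ι → R) :
    ∑ a, vectorDFT ψ F a * vectorDFT ψ G a * ψ (a ⬝ᵥ y) =
      (Fintype.card R : R') ^ Fintype.card ι * ∑ x, F x * G (-(x + y)) := by
  classical
  calc ∑ a, vectorDFT ψ F a * vectorDFT ψ G a * ψ (a ⬝ᵥ y)
      = ∑ a, ∑ x, ∑ z, F x * G z * ψ (a ⬝ᵥ (z + (x + y))) := by
        refine Finset.sum_congr rfl fun a _ => ?_
        rw [vectorDFT, vectorDFT, Finset.sum_mul_sum, Finset.sum_mul]
        refine Finset.sum_congr rfl fun x _ => ?_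
        rw [Finset.sum_mul]
        refine Finset.sum_congr rfl fun z _ => ?_
        simp only [dotProduct_add, AddChar.map_add_eq_mul]
        ring
    _ = ∑ x, ∑ z, F x * G z * ∑ a, ψ (a ⬝ᵥ (z + (x + y))) := by
        simp only [Finset.mul_sum]
        rw [Finset.sum_comm]
        exact Finset.sum_congr rfl fun x _ => Finset.sum_comm
    _ = ∑ x, F x * G (-(x + y)) * (Fintype.card R : R') ^ Fintype.card ι := by
        simp only [sum_addChar_dotProduct_eq_ite hψ, add_eq_zero_iff_eq_neg, mul_ite, mul_zero,
          Finset.sum_ite_eq', Finset.mem_univ, if_true]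
    _ = (Fintype.card R : R') ^ Fintype.card ι * ∑ x, F x * G (-(x + y)) := by
        rw [← Finset.sum_mul, mul_comm]

theorem sum_vectorDFT_mul_vectorDFT (hψ : ψ.IsPrimitive) (F G : (ι → R) → R') :
    ∑ a, vectorDFT ψ F a * vectorDFT ψ G a =
      (Fintype.card R : R') ^ Fintype.card ι * ∑ x, F x * G (-x) := by
  simpa using sum_vectorDFT_mul_vectorDFT_mul_addChar hψ F G 0

theorem sum_vectorDFT_mul_vectorDFT_mul_vectorDFT (hψ : ψ.IsPrimitive)
    (F G H : (ι → R) → R') :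
    ∑ a, vectorDFT ψ F a * vectorDFT ψ G a * vectorDFT ψ H a =
      (Fintype.card R : R') ^ Fintype.card ι * ∑ x, ∑ y, F x * G y * H (-(x + y)) := by
  calc ∑ a, vectorDFT ψ F a * vectorDFT ψ G a * vectorDFT ψ H a
      = ∑ a, ∑ y, G y * (vectorDFT ψ F a * vectorDFT ψ H a * ψ (a ⬝ᵥ y)) := by
        refine Finset.sum_congr rfl fun a _ => ?_
        rw [mul_right_comm, vectorDFT.eq_def ψ G, Finset.mul_sum]
        exact Finset.sum_congr rfl fun y _ => mul_left_comm _ _ _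
    _ = ∑ y, G y * ((Fintype.card R : R') ^ Fintype.card ι * ∑ x, F x * H (-(x + y))) := by
        rw [Finset.sum_comm]
        simp only [← Finset.mul_sum, sum_vectorDFT_mul_vectorDFT_mul_addChar hψ]
    _ = (Fintype.card R : R') ^ Fintype.card ι * ∑ x, ∑ y, F x * G y * H (-(x + y)) := by
        rw [Finset.sum_comm]
        simp only [Finset.mul_sum]
        congr! 2
        ring

end VectorDFT

theorem sum_pow_three_le_mul_sum_sq {ι K : Type*} [Ring K] [LinearOrder K]
    [IsOrderedRing K] {s : Finset ι} {w : ι → K} {M : K} (hM : ∀ a ∈ s, w a ≤ M) :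
    ∑ a ∈ s, w a ^ 3 ≤ M * ∑ a ∈ s, w a ^ 2 := by
  rw [Finset.mul_sum]
  refine Finset.sum_le_sum fun a ha => ?_
  rw [pow_succ' _ 2]
  exact mul_le_mul_of_nonneg_right (hM a ha) (sq_nonneg _)

/-- The sign character `b ↦ (-1) ^ b` of `ZMod 2`, through which Boolean functions become
`±1`-valued. -/
def signChar : AddChar (ZMod 2) ℝ :=
  AddChar.zmodChar 2 neg_one_sq

theorem signChar_apply (b : ZMod 2) : signChar b = (-1 : ℝ) ^ b.val :=
  rfl

theorem signChar_isPrimitive : signChar.IsPrimitive :=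
  AddChar.zmodChar_primitive_of_primitive_root 2 (IsPrimitiveRoot.neg_one 0 (by norm_num))

theorem signChar_mul_self (b : ZMod 2) : signChar b * signChar b = 1 := by
  rw [← AddChar.map_add_eq_mul, CharTwo.add_self_eq_zero, AddChar.map_zero_eq_one]

theorem ite_add_eq_eq_half_add_signChar (a b c : ZMod 2) :
    (if a + b = c then 1 else 0 : ℝ) =
      1 / 2 + 1 / 2 * (signChar a * signChar b * signChar c) := by
  have ite_eq_zero (t : ZMod 2) : (if t = 0 then 1 else 0 : ℝ) = 1 / 2 + 1 / 2 * signChar t := by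
    obtain rfl | rfl : t = 0 ∨ t = 1 := by revert t; decide
    · norm_num [AddChar.map_zero_eq_one]
    · norm_num [signChar_apply, ZMod.val_one]
  rw [← AddChar.map_add_eq_mul, ← AddChar.map_add_eq_mul, ← ite_eq_zero]
  simp only [CharTwo.add_eq_zero]

section Walsh

variable (n : ℕ) (f : (Fin n → ZMod 2) → ZMod 2)

theorem walsh_eq_vectorDFT (a : Fin n → ZMod 2) :
    walsh n f a = (2 ^ n : ℝ)⁻¹ * vectorDFT signChar (fun x => signChar (f x)) a := by
  simp only [walsh, ← signChar_apply, AddChar.map_add_eq_mul, vectorDFT, dotProduct]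

theorem sum_walsh_sq : ∑ a, walsh n f a ^ 2 = 1 := by
  simp only [walsh_eq_vectorDFT, mul_pow, ← Finset.mul_sum, sq (vectorDFT _ _ _),
    sum_vectorDFT_mul_vectorDFT signChar_isPrimitive, ZModModule.neg_eq_self, signChar_mul_self,
    ZMod.card, Fintype.card_fin, Nat.cast_ofNat, Finset.sum_const, Finset.card_univ,
    Fintype.card_fun, nsmul_eq_mul, mul_one, Nat.cast_pow]
  field_simp

theorem sum_walsh_pow_three :
    ∑ a, walsh n f a ^ 3 =
      (4 ^ n : ℝ)⁻¹ * ∑ x, ∑ y, signChar (f x) * signChar (f y) * signChar (f (x + y)) := by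
  have four_pow : (4 : ℝ) ^ n = 2 ^ n * 2 ^ n := by rw [← mul_pow]; norm_num
  simp only [walsh_eq_vectorDFT, mul_pow, ← Finset.mul_sum, pow_three' (vectorDFT _ _ _),
    sum_vectorDFT_mul_vectorDFT_mul_vectorDFT signChar_isPrimitive, ZModModule.neg_eq_self,
    ZMod.card, Fintype.card_fin, Nat.cast_ofNat, four_pow]
  field_simp

theorem card_filter_add_eq_div_four_pow :
    (#{p : (Fin n → ZMod 2) × (Fin n → ZMod 2) | f p.1 + f p.2 = f (p.1 + p.2)} : ℝ) / 4 ^ n =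
      1 / 2 + (1 / 2) * ∑ a, walsh n f a ^ 3 := by
  have card_pairs : (Fintype.card ((Fin n → ZMod 2) × (Fin n → ZMod 2)) : ℝ) = 4 ^ n := by
    norm_num [← mul_pow]
  rw [Finset.natCast_card_filter]
  simp only [ite_add_eq_eq_half_add_signChar, Finset.sum_add_distrib, ← Finset.mul_sum,
    Finset.sum_const, Finset.card_univ, nsmul_eq_mul, card_pairs]
  rw [sum_walsh_pow_three, Fintype.sum_prod_type]
  field_simp

end Walsh

theorem stmt5 (n : ℕ) (hn : 1 ≤ n) (f : (Fin n → ZMod 2) → ZMod 2) :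
    ((Finset.univ.filter fun p : (Fin n → ZMod 2) × (Fin n → ZMod 2) =>
        f p.1 + f p.2 = f (p.1 + p.2)).card : ℝ) / 4 ^ n =
      1 / 2 + (1 / 2) * ∑ a : Fin n → ZMod 2, walsh n f a ^ 3 ∧
    ((Finset.univ.filter fun p : (Fin n → ZMod 2) × (Fin n → ZMod 2) =>
        f p.1 + f p.2 = f (p.1 + p.2)).card : ℝ) / 4 ^ n ≤
      1 / 2 + (1 / 2) *
        Finset.univ.sup' ⟨(fun _ => 0), Finset.mem_univ _⟩
          (fun a : Fin n → ZMod 2 => walsh n f a) := by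
  refine ⟨card_filter_add_eq_div_four_pow n f, ?_⟩
  rw [card_filter_add_eq_div_four_pow]
  gcongr
  set M := Finset.univ.sup' _ (walsh n f)
  have walsh_le : ∀ a ∈ Finset.univ, walsh n f a ≤ M := fun a ha => Finset.le_sup' (walsh n f) ha
  calc ∑ a, walsh n f a ^ 3 ≤ M * ∑ a, walsh n f a ^ 2 := sum_pow_three_le_mul_sum_sq walsh_le
    _ = M := by rw [sum_walsh_sq, mul_one]
end

section
/- Let q ≥ 1 be a natural number and let τ' be a real number with 0 ≤ τ' ≤ 1, and set τ₁ = ⌊(2^q / π) · arcsin(√τ')⌋. Then 0 ≤ τ' − sin²(π · τ₁ / 2^q) ≤ 2π / 2^q. -/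
open Finset Real Classical

/-! The function `sin²` is `1`-Lipschitz, because
`sin² x - sin² y = sin (x - y) * sin (x + y)`, and it is increasing on `[0, π / 2]`. Writing
`τ = sin² a` with `a ∈ [0, π / 2]` and rounding `a` down to a multiple of `π / N` therefore lowers
`sin²` by a nonnegative amount smaller than `π / N`. -/

theorem sin_sq_sub_sin_sq (x y : ℝ) :
    sin x ^ 2 - sin y ^ 2 = sin (x - y) * sin (x + y) := by
  rw [sin_sub, sin_add]
  linear_combination sin y ^ 2 * sin_sq_add_cos_sq x - sin x ^ 2 * sin_sq_add_cos_sq y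

theorem abs_sin_sq_sub_sin_sq_le (x y : ℝ) : |sin x ^ 2 - sin y ^ 2| ≤ |x - y| :=
  calc |sin x ^ 2 - sin y ^ 2| = |sin (x - y)| * |sin (x + y)| := by
        rw [sin_sq_sub_sin_sq, abs_mul]
    _ ≤ |x - y| * 1 :=
        mul_le_mul abs_sin_le_abs (abs_sin_le_one _) (abs_nonneg _) (abs_nonneg _)
    _ = |x - y| := mul_one _

theorem monotoneOn_sin_sq : MonotoneOn (fun x : ℝ => sin x ^ 2) (Set.Icc 0 (π / 2)) := by
  intro x hx y hy hxy
  have hx_sin : 0 ≤ sin x := sin_nonneg_of_nonneg_of_le_pi hx.1 (by linarith [hx.2, pi_pos])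
  have h_sin : sin x ≤ sin y :=
    sin_le_sin_of_le_of_le_pi_div_two (by linarith [hx.1, pi_pos]) hy.2 hxy
  exact pow_le_pow_left₀ hx_sin h_sin 2

theorem sin_sq_arcsin_sqrt {t : ℝ} (h0 : 0 ≤ t) (h1 : t ≤ 1) : sin (arcsin (√t)) ^ 2 = t := by
  rw [sin_arcsin (by linarith [sqrt_nonneg t]) (sqrt_le_one.mpr h1), sq_sqrt h0]

theorem stmt17_general {N τ : ℝ} (hN : 0 < N) (h0 : 0 ≤ τ) (h1 : τ ≤ 1)
    {k : ℕ} (hk : k = ⌊(N / π) * arcsin (√τ)⌋₊) :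
    0 ≤ τ - sin (π * k / N) ^ 2 ∧ τ - sin (π * k / N) ^ 2 < π / N := by
  set a := arcsin (√τ)
  have ha : 0 ≤ a := arcsin_nonneg.mpr (sqrt_nonneg τ)
  have ha' : a ≤ π / 2 := arcsin_le_pi_div_two _
  have hstep : 0 < π / N := div_pos pi_pos hN
  have hk_floor : (k : ℝ) = ⌊a / (π / N)⌋ := by
    rw [← natCast_floor_eq_intCast_floor (div_nonneg ha hstep.le), hk, div_div_eq_mul_div,
      mul_comm, mul_div_assoc]
  have hk_mul : π * k / N = ⌊a / (π / N)⌋ * (π / N) := by rw [← hk_floor]; ring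
  set b := π * k / N
  have hb : 0 ≤ b := by positivity
  have hba : b ≤ a := sub_nonneg.mp (hk_mul ▸ Int.sub_floor_div_mul_nonneg a hstep)
  have hab : a - b < π / N := hk_mul ▸ Int.sub_floor_div_mul_lt a hstep
  rw [← sin_sq_arcsin_sqrt h0 h1]
  refine ⟨sub_nonneg.mpr (monotoneOn_sin_sq ⟨hb, hba.trans ha'⟩ ⟨ha, ha'⟩ hba), ?_⟩
  calc sin a ^ 2 - sin b ^ 2 ≤ |a - b| := (le_abs_self _).trans (abs_sin_sq_sub_sin_sq_le a b)
    _ = a - b := abs_of_nonneg (sub_nonneg.mpr hba)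
    _ < π / N := hab

theorem stmt17 (q : ℕ) (hq : 1 ≤ q) (τ' : ℝ) (h0 : 0 ≤ τ') (h1 : τ' ≤ 1)
    (τ₁ : ℕ) (hτ₁ : τ₁ = ⌊(2 ^ q / π) * Real.arcsin (Real.sqrt τ')⌋₊) :
    0 ≤ τ' - Real.sin (π * τ₁ / 2 ^ q) ^ 2 ∧
    τ' - Real.sin (π * τ₁ / 2 ^ q) ^ 2 ≤ 2 * π / 2 ^ q := by
  obtain ⟨hnonneg, hlt⟩ := stmt17_general (by positivity : (0 : ℝ) < 2 ^ q) h0 h1 hτ₁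
  exact ⟨hnonneg, hlt.le.trans (by gcongr; linarith [pi_pos])⟩
end

section
/- Let n ≥ 1 and let f : {0,1}^n → {0,1} be a bent function, i.e. |f̂(a)| = 2^{−n/2} for every a ∈ {0,1}^n. Then the normalised non-linearity of f equals η(f) = 1/2 − (1/2) · 2^{−n/2}. -/
open Finset Real Classical

/-!
The sign `(-1) ^ (f x + g x)` is `1` where `f` and `g` agree and `-1` where they differ, so it sums
over the cube to `2 ^ n - 2 * dist(f, g)`. Taking `g` affine, the relative distance from `f` to the
two affine functions with linear part `a` is `(1 ∓ f̂(a)) / 2`. The nearer of the two is at relative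
distance `(1 - |f̂(a)|) / 2`, whence `η(f) = 1/2 - 1/2 * max |f̂|`; for a bent function the maximum
is over a constant.
-/

section Sign

variable {R : Type*} [Ring R]

lemma neg_one_pow_val_add (u v : ZMod 2) :
    (-1 : R) ^ (u + v).val = (-1) ^ u.val * (-1) ^ v.val := by
  rw [ZMod.val_add, ← neg_one_pow_eq_pow_mod_two, pow_add]

lemma neg_one_pow_val_add_eq_ite (u v : ZMod 2) :
    (-1 : R) ^ (u + v).val = 1 - 2 * if u ≠ v then 1 else 0 := by
  by_cases huv : u = v
  · simp [huv, CharTwo.add_self_eq_zero]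
  · have h_add : u + v = 1 := Fin.eq_one_of_ne_zero _ fun h => huv (CharTwo.add_eq_zero.mp h)
    rw [h_add, ZMod.val_one, pow_one, if_pos huv]
    norm_num

lemma exists_neg_one_pow_val_mul_eq_abs [LinearOrder R] (r : R) :
    ∃ b : ZMod 2, (-1) ^ b.val * r = |r| := by
  rcases abs_choice r with hr | hr
  · exact ⟨0, by simp [hr]⟩
  · exact ⟨1, by simp [hr, ZMod.val_one]⟩

end Sign

section Nonlinearity

variable (n : ℕ) (f : (Fin n → ZMod 2) → ZMod 2)

lemma sum_neg_one_pow_val_add_eq_sub_hamDist (g : (Fin n → ZMod 2) → ZMod 2) :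
    ∑ x, (-1 : ℝ) ^ (f x + g x).val = 2 ^ n - 2 * hamDist n f g := by
  simp only [neg_one_pow_val_add_eq_ite, sum_sub_distrib, ← mul_sum, sum_boole, hamDist]
  simp

lemma sum_neg_one_pow_val_add_chi (a : Fin n → ZMod 2) (b : ZMod 2) :
    ∑ x, (-1 : ℝ) ^ (f x + chi n a b x).val = 2 ^ n * ((-1) ^ b.val * walsh n f a) := by
  simp only [chi, walsh, ← add_assoc, neg_one_pow_val_add _ b, ← sum_mul]
  field_simp

lemma hamDist_chi_div_two_pow (a : Fin n → ZMod 2) (b : ZMod 2) :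
    (hamDist n f (chi n a b) : ℝ) / 2 ^ n = 1 / 2 - 1 / 2 * ((-1) ^ b.val * walsh n f a) := by
  have h_sum := (sum_neg_one_pow_val_add_chi n f a b).symm.trans
    (sum_neg_one_pow_val_add_eq_sub_hamDist n f _)
  rw [div_eq_iff (by positivity)]
  linarith

lemma nonlinearity_eq_sub_iSup_abs_walsh :
    nonlinearity n f = 1 / 2 - 1 / 2 * ⨆ a, |walsh n f a| := by
  simp only [nonlinearity, hamDist_chi_div_two_pow]
  apply le_antisymm
  · obtain ⟨a, ha⟩ := exists_eq_ciSup_of_finite (f := fun a => |walsh n f a|)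
    obtain ⟨b, hb⟩ := exists_neg_one_pow_val_mul_eq_abs (walsh n f a)
    rw [← ha, ← hb]
    exact inf'_le _ (mem_univ (a, b))
  · refine le_inf' _ _ fun ⟨a, b⟩ _ => ?_
    have h_signed : (-1) ^ b.val * walsh n f a ≤ ⨆ a, |walsh n f a| := calc
      (-1) ^ b.val * walsh n f a ≤ |(-1) ^ b.val * walsh n f a| := le_abs_self _
      _ = |walsh n f a| := by rw [abs_mul, abs_neg_one_pow, one_mul]
      _ ≤ ⨆ a, |walsh n f a| := le_ciSup (Set.finite_range fun a => |walsh n f a|).bddAbove a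
    linarith

end Nonlinearity

theorem stmt19 (n : ℕ) (hn : 1 ≤ n) (f : (Fin n → ZMod 2) → ZMod 2)
    (hbent : ∀ a : Fin n → ZMod 2, |walsh n f a| = (Real.sqrt (2 ^ n))⁻¹) :
    nonlinearity n f = 1 / 2 - (1 / 2) * (Real.sqrt (2 ^ n))⁻¹ := by
  simp only [nonlinearity_eq_sub_iSup_abs_walsh, hbent, ciSup_const]
end
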